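/- arXiv:2002.09388 — 7 statements merged into one kernel-verified Lean document; each statement's English description precedes it below -/
import Mathlib

section
/- For every γ = [[a,b],[c,d]] ∈ SL(2,ℤ) and every τ ∈ ℍ, the matrix Φ₁(τ) = [[(iπτ/6)E₂(τ)+1, τ],[(iπ/6)E₂(τ), 1]] satisfies the intertwining identity Φ₁(γ·τ) · [[(cτ+d)⁻¹, 0],[0, cτ+d]] = γ · Φ₁(τ), where on the right-hand side γ is regarded as a matrix in M₂(ℂ). -/
open Matrix Complex

noncomputable section

abbrev SL2Z := Matrix.SpecialLinearGroup (Fin 2) ℤ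

/-- Möbius action of `SL(2,ℤ)` on the upper half plane, as a formula on `ℂ`. -/
def moebius (γ : SL2Z) (τ : ℂ) : ℂ :=
  ((γ 0 0 : ℂ) * τ + (γ 0 1 : ℂ)) / ((γ 1 0 : ℂ) * τ + (γ 1 1 : ℂ))

/-- `γ ∈ SL(2,ℤ)` regarded as a matrix in `M₂(ℂ)`. -/
def toMatC (γ : SL2Z) : Matrix (Fin 2) (Fin 2) ℂ :=
  (γ : Matrix (Fin 2) (Fin 2) ℤ).map (Int.cast : ℤ → ℂ)

/-- σ₁(n), the sum of the divisors of `n`. -/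
def sigma1 (n : ℕ) : ℕ := ∑ d ∈ n.divisors, d

/-- The weight 2 Eisenstein series `E₂(τ) = 1 - 24 ∑_{n ≥ 1} σ₁(n) e^{2πinτ}`. -/
def E2 (τ : ℂ) : ℂ :=
  1 - 24 * ∑' n : ℕ, (sigma1 (n + 1) : ℂ) *
    Complex.exp (2 * (Real.pi : ℂ) * Complex.I * ((n : ℂ) + 1) * τ)

/-- `π` as a complex number. -/
def piC : ℂ := (Real.pi : ℂ)

/-- The matrix-valued modular form `f(τ)` of weight `-2`. -/
def fM (τ : ℂ) : Matrix (Fin 2) (Fin 2) ℂ := !![τ, -τ ^ 2; 1, -τ]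

/-- The matrix-valued modular form `h(τ)` of weight `0`. -/
def hM (τ : ℂ) : Matrix (Fin 2) (Fin 2) ℂ :=
  !![Complex.I * piC * τ / 3 * E2 τ + 1, -(Complex.I * piC * τ ^ 2 / 3) * E2 τ - 2 * τ;
     Complex.I * piC / 3 * E2 τ, -(Complex.I * piC * τ / 3) * E2 τ - 1]

/-- The matrix-valued modular form `e(τ)` of weight `2`. -/
def eM (τ : ℂ) : Matrix (Fin 2) (Fin 2) ℂ :=
  !![piC ^ 2 * τ / 36 * E2 τ ^ 2 - Complex.I * piC / 6 * E2 τ,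
       -(piC ^ 2 * τ ^ 2 / 36) * E2 τ ^ 2 + Complex.I * piC * τ / 3 * E2 τ + 1;
     piC ^ 2 / 36 * E2 τ ^ 2,
       -(piC ^ 2 * τ / 36) * E2 τ ^ 2 + Complex.I * piC / 6 * E2 τ]

/-- The matrix `Φ₁(τ)`. -/
def Phi1 (τ : ℂ) : Matrix (Fin 2) (Fin 2) ℂ :=
  !![Complex.I * piC * τ / 6 * E2 τ + 1, τ; Complex.I * piC / 6 * E2 τ, 1]

lemma E2_eq_mathlib (z : UpperHalfPlane) : E2 (z : ℂ) = EisensteinSeries.E2 z := by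
  have hz : riemannZeta 2 = (Real.pi : ℂ) ^ 2 / 6 := riemannZeta_two
  have hpi : (Real.pi : ℂ) ≠ 0 := by exact_mod_cast Real.pi_ne_zero
  have hs : ∑' n : ℕ, (sigma1 (n + 1) : ℂ) *
      Complex.exp (2 * (Real.pi : ℂ) * Complex.I * ((n : ℂ) + 1) * z) =
      ∑' n : ℕ+, (ArithmeticFunction.sigma 1 (n : ℕ) : ℂ) *
        Complex.exp (2 * (Real.pi : ℂ) * Complex.I * z) ^ (n : ℕ) := by
    rw [tsum_pnat_eq_tsum_succ (f := fun n : ℕ => (ArithmeticFunction.sigma 1 n : ℂ) *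
        Complex.exp (2 * (Real.pi : ℂ) * Complex.I * z) ^ n)]
    refine tsum_congr fun n => ?_
    rw [← Complex.exp_nat_mul, ArithmeticFunction.sigma_one_apply, sigma1]
    congr 2
    push_cast
    ring
  simp only [E2, EisensteinSeries.E2, Pi.smul_apply, smul_eq_mul,
    EisensteinSeries.G2_eq_tsum_cexp, hz, hs]
  field_simp
  ring

lemma E2_moebius (γ : SL2Z) (z : UpperHalfPlane) (h : (γ 1 0 : ℂ) * z + (γ 1 1 : ℂ) ≠ 0) :
    E2 (moebius γ z) = ((γ 1 0 : ℂ) * z + (γ 1 1 : ℂ)) ^ 2 * E2 z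
      - 6 * Complex.I * (γ 1 0 : ℂ) / piC * ((γ 1 0 : ℂ) * z + (γ 1 1 : ℂ)) := by
  have hpi : (Real.pi : ℂ) ≠ 0 := by exact_mod_cast Real.pi_ne_zero
  have hm : moebius γ z = ((γ • z : UpperHalfPlane) : ℂ) := by
    rw [UpperHalfPlane.coe_specialLinearGroup_apply]
    simp [moebius]
  have key := congrFun (EisensteinSeries.E2_slash_action γ) z
  rw [ModularForm.SL_slash_apply] at key
  simp only [Pi.sub_apply, Pi.smul_apply, smul_eq_mul, EisensteinSeries.D2,
    ModularGroup.denom_apply, riemannZeta_two, ← E2_eq_mathlib, ← hm] at key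
  rw [_root_.zpow_neg] at key
  have h2 : E2 (moebius γ z) = (E2 z - 1 / (2 * ((Real.pi : ℂ) ^ 2 / 6)) *
      (2 * Real.pi * Complex.I * γ 1 0 / ((γ 1 0 : ℂ) * z + γ 1 1))) *
      ((γ 1 0 : ℂ) * z + γ 1 1) ^ (2 : ℤ) := by
    rw [← key, mul_assoc, inv_mul_cancel₀ (zpow_ne_zero _ h), mul_one]
  rw [h2, piC]
  have e2 : ((γ 1 0 : ℂ) * z + γ 1 1) ^ (2 : ℤ) = ((γ 1 0 : ℂ) * z + γ 1 1) ^ 2 := rfl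
  rw [e2]
  field_simp

/-- the intertwining identity
`Φ₁(γ·τ) · [[(cτ+d)⁻¹, 0],[0, cτ+d]] = γ · Φ₁(τ)`. -/
theorem Phi1_intertwining (γ : SL2Z) (τ : ℂ) (hτ : 0 < τ.im) :
    Phi1 (moebius γ τ) *
        !![((γ 1 0 : ℂ) * τ + (γ 1 1 : ℂ))⁻¹, 0; 0, (γ 1 0 : ℂ) * τ + (γ 1 1 : ℂ)] =
      toMatC γ * Phi1 τ := by
  have hpi : piC ≠ 0 := by
    rw [piC]
    exact_mod_cast Real.pi_ne_zero
  let z : UpperHalfPlane := ⟨τ, hτ⟩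
  have hz : (z : ℂ) = τ := rfl
  have h : (γ 1 0 : ℂ) * τ + (γ 1 1 : ℂ) ≠ 0 := by
    have := UpperHalfPlane.denom_ne_zero γ z
    rwa [ModularGroup.denom_apply] at this
  have hE := E2_moebius γ z h
  rw [hz] at hE
  have hdet : (γ 0 0 : ℂ) * (γ 1 1 : ℂ) - (γ 0 1 : ℂ) * (γ 1 0 : ℂ) = 1 := by
    have := Matrix.det_fin_two γ.1
    rw [γ.2] at this
    exact_mod_cast this.symm
  have hI := Complex.I_sq
  have hmo : moebius γ τ * ((γ 1 0 : ℂ) * τ + (γ 1 1 : ℂ)) = (γ 0 0 : ℂ) * τ + (γ 0 1 : ℂ) :=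
    div_mul_cancel₀ _ h
  have h10 : Complex.I * piC / 6 * E2 (moebius γ τ) * ((γ 1 0 : ℂ) * τ + (γ 1 1 : ℂ))⁻¹ =
      Complex.I * piC / 6 * E2 τ * ((γ 1 0 : ℂ) * τ + (γ 1 1 : ℂ)) + (γ 1 0 : ℂ) := by
    rw [hE]
    field_simp
    linear_combination (-6 * (γ 1 0 : ℂ)) * hI
  have hinv : ((γ 1 0 : ℂ) * τ + (γ 1 1 : ℂ))⁻¹ =
      (γ 0 0 : ℂ) - moebius γ τ * (γ 1 0 : ℂ) := by
    symm
    apply eq_inv_of_mul_eq_one_left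
    linear_combination hdet - (γ 1 0 : ℂ) * hmo
  ext i j
  fin_cases i <;> fin_cases j
  · simp [Phi1, toMatC, Matrix.mul_apply, Fin.sum_univ_two]
    linear_combination moebius γ τ * h10 + hinv + Complex.I * piC / 6 * E2 τ * hmo
  · simp [Phi1, toMatC, Matrix.mul_apply, Fin.sum_univ_two]
    linear_combination hmo
  · simp [Phi1, toMatC, Matrix.mul_apply, Fin.sum_univ_two]
    linear_combination h10
  · simp [Phi1, toMatC, Matrix.mul_apply, Fin.sum_univ_two]

end
end

section
/- For every γ = [[a,b],[c,d]] ∈ SL(2,ℤ) and every τ ∈ ℍ, the matrix-valued function h satisfies the weight-0 equivariance law h(γ·τ) · γ = γ · h(τ), where γ is regarded as a matrix in M₂(ℂ); equivalently h(γ·τ) = γ h(τ) γ⁻¹. -/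
open Matrix Complex

noncomputable section

open UpperHalfPlane in
lemma E2_bridge (z : ℍ) : E2 (z : ℂ) = EisensteinSeries.E2 z := by
  rw [EisensteinSeries.E2_eq_tsum_cexp, E2]
  congr 2
  rw [tsum_pnat_eq_tsum_succ (f := fun n : ℕ => (ArithmeticFunction.sigma 1 n : ℂ) * Complex.exp (2 * Real.pi * Complex.I * z) ^ n)]
  apply tsum_congr
  intro n
  rw [← Complex.exp_nat_mul]
  congr 2
  · simp [sigma1, ArithmeticFunction.sigma_one_apply]
  · push_cast; ring

open UpperHalfPlane in
lemma E2_transf (γ : SL2Z) (z : ℍ) :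
    (γ 1 0 : ℂ) * z + (γ 1 1 : ℂ) ≠ 0 ∧
    E2 (moebius γ z) = ((γ 1 0 : ℂ) * z + (γ 1 1 : ℂ)) ^ 2 * E2 z
      + 6 * (γ 1 0 : ℂ) * ((γ 1 0 : ℂ) * z + (γ 1 1 : ℂ)) / (Real.pi * Complex.I) := by
  have hd : (γ 1 0 : ℂ) * z + (γ 1 1 : ℂ) ≠ 0 := by
    have := UpperHalfPlane.denom_ne_zero γ z
    rwa [ModularGroup.denom_apply] at this
  refine ⟨hd, ?_⟩
  have hm : moebius γ z = ((γ • z : ℍ) : ℂ) := by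
    rw [UpperHalfPlane.specialLinearGroup_apply]; simp [moebius]
  have h := congrFun (EisensteinSeries.E2_slash_action γ) z
  rw [hm, E2_bridge, E2_bridge]
  rw [ModularForm.SL_slash_apply] at h
  simp only [Pi.sub_apply, Pi.smul_apply, EisensteinSeries.D2, ModularGroup.denom_apply, smul_eq_mul, riemannZeta_two] at h
  have hpi : (Real.pi : ℂ) ≠ 0 := by exact_mod_cast Real.pi_ne_zero
  rw [_root_.zpow_neg, ← div_eq_mul_inv, div_eq_iff (by exact zpow_ne_zero _ hd)] at h
  rw [h]
  field_simp
  ring_nf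
  simp
  try ring

/-- the weight 0 equivariance law `h(γ·τ)·γ = γ·h(τ)`. -/
theorem hM_weight_zero_equivariance (γ : SL2Z) (τ : ℂ) (hτ : 0 < τ.im) :
    hM (moebius γ τ) * toMatC γ = toMatC γ * hM τ := by
  obtain ⟨hd, h⟩ := E2_transf γ ⟨τ, hτ⟩
  simp only [UpperHalfPlane.coe_mk] at hd h
  have hdet : (γ 0 0 : ℂ) * γ 1 1 - γ 0 1 * γ 1 0 = 1 := by
    have := γ.det_coe
    rw [Matrix.det_fin_two] at this
    exact_mod_cast this
  have hpi : (Real.pi : ℂ) ≠ 0 := by exact_mod_cast Real.pi_ne_zero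
  have hI := Complex.I_ne_zero
  have hmo : moebius γ τ = ((γ 0 0 : ℂ) * τ + (γ 0 1 : ℂ)) / ((γ 1 0 : ℂ) * τ + (γ 1 1 : ℂ)) := rfl
  have e : Complex.I * piC / 3 * E2 (moebius γ τ) = ((γ 1 0 : ℂ) * τ + (γ 1 1 : ℂ)) ^ 2 * (Complex.I * piC / 3 * E2 τ)
      + 2 * (γ 1 0 : ℂ) * ((γ 1 0 : ℂ) * τ + (γ 1 1 : ℂ)) := by
    rw [h, piC]; field_simp; ring
  have hform : ∀ t, hM t = !![t * (Complex.I * piC / 3 * E2 t) + 1, -t ^ 2 * (Complex.I * piC / 3 * E2 t) - 2 * t;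
      Complex.I * piC / 3 * E2 t, -t * (Complex.I * piC / 3 * E2 t) - 1] := by
    intro t; rw [hM]; congr! 4 <;> ring_nf
  rw [hform, hform, e, hmo]
  generalize Complex.I * piC / 3 * E2 τ = u
  simp only [toMatC]
  ext i j
  fin_cases i <;> fin_cases j <;> simp [Matrix.mul_apply, Fin.sum_univ_two]
  all_goals
    generalize (γ 0 0 : ℂ) = a at *
    generalize (γ 0 1 : ℂ) = b at *
    generalize (γ 1 0 : ℂ) = c at *
    generalize (γ 1 1 : ℂ) = d at *
    clear e h hmo
    field_simp
    grind

end
end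

section
/- For every τ ∈ ℍ the matrices h(τ), e(τ), f(τ) form a standard sl₂-triple: [h(τ), e(τ)] = 2 e(τ), [h(τ), f(τ)] = −2 f(τ), and [e(τ), f(τ)] = h(τ), where [A,B] = AB − BA is the matrix commutator. -/
open Matrix Complex

noncomputable section

/-- `(h(τ), e(τ), f(τ))` is a standard `sl₂`-triple for every `τ ∈ ℍ`. -/
theorem standard_sl2_triple (τ : ℂ) (hτ : 0 < τ.im) :
    hM τ * eM τ - eM τ * hM τ = (2 : ℂ) • eM τ ∧
    hM τ * fM τ - fM τ * hM τ = (-2 : ℂ) • fM τ ∧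
    eM τ * fM τ - fM τ * eM τ = hM τ := by
  have hI : Complex.I ^ 2 = -1 := Complex.I_sq
  unfold hM eM fM
  generalize E2 τ = E
  generalize piC = p
  generalize Complex.I = i at *
  refine ⟨?_, ?_, ?_⟩
  all_goals
    ext j k
    fin_cases j <;> fin_cases k <;>
      simp [Matrix.mul_apply, Fin.sum_univ_two] <;> grind

end
end

section
/- Define matrix-valued functions h̄(τ) = h(τ), ē(τ) = (E₄(τ)E₆(τ)/Δ(τ))·e(τ) and f̄(τ) = (E₄(τ)²E₆(τ)/Δ(τ))·f(τ). Then for every τ ∈ ℍ with Δ(τ) ≠ 0 the commutation relations [h̄(τ), ē(τ)] = 2 ē(τ), [h̄(τ), f̄(τ)] = −2 f̄(τ), and [ē(τ), f̄(τ)] = j(τ)(j(τ) − 1728) h̄(τ) hold, where [A,B] = AB − BA. -/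
open Matrix Complex

noncomputable section

/-- σ_k(n), the sum of the k-th powers of the divisors of `n`. -/
def sigmaN (k n : ℕ) : ℕ := ∑ d ∈ n.divisors, d ^ k

/-- The normalized Eisenstein series of weight 4. -/
def E4 (τ : ℂ) : ℂ :=
  1 + 240 * ∑' n : ℕ, (sigmaN 3 (n + 1) : ℂ) *
    Complex.exp (2 * (Real.pi : ℂ) * Complex.I * ((n : ℂ) + 1) * τ)

/-- The normalized Eisenstein series of weight 6. -/
def E6 (τ : ℂ) : ℂ :=
  1 - 504 * ∑' n : ℕ, (sigmaN 5 (n + 1) : ℂ) *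
    Complex.exp (2 * (Real.pi : ℂ) * Complex.I * ((n : ℂ) + 1) * τ)

/-- The modular discriminant `Δ = (E₄³ − E₆²)/1728`. -/
def Δmod (τ : ℂ) : ℂ := (E4 τ ^ 3 - E6 τ ^ 2) / 1728

/-- Klein's absolute invariant `j = E₄³/Δ`. -/
def jmod (τ : ℂ) : ℂ := E4 τ ^ 3 / Δmod τ

theorem aux_he (τ : ℂ) : hM τ * eM τ - eM τ * hM τ = (2 : ℂ) • eM τ := by
  have hI := Complex.I_sq
  ext i j
  fin_cases i <;> fin_cases j <;> simp [hM, eM, Matrix.mul_apply, Fin.sum_univ_two] <;>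
    ring_nf <;> simp only [hI, Complex.I_sq, Complex.I_pow_three] <;> ring

theorem aux_hf (τ : ℂ) : hM τ * fM τ - fM τ * hM τ = (-2 : ℂ) • fM τ := by
  ext i j
  fin_cases i <;> fin_cases j <;> simp [hM, fM, Matrix.mul_apply, Fin.sum_univ_two] <;> ring

theorem aux_ef (τ : ℂ) : eM τ * fM τ - fM τ * eM τ = hM τ := by
  ext i j
  fin_cases i <;> fin_cases j <;> simp [hM, eM, fM, Matrix.mul_apply, Fin.sum_univ_two] <;> ring

theorem aux_j (τ : ℂ) (hΔ : Δmod τ ≠ 0) : jmod τ * (jmod τ - 1728) =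
    (E4 τ * E6 τ / Δmod τ) * (E4 τ ^ 2 * E6 τ / Δmod τ) := by
  have h : E6 τ ^ 2 = E4 τ ^ 3 - 1728 * Δmod τ := by unfold Δmod; ring
  unfold jmod
  field_simp
  rw [h]
  try ring

/-- with `h̄ = h`, `ē = (E₄E₆/Δ)·e`, `f̄ = (E₄²E₆/Δ)·f`, the commutation
relations `[h̄,ē] = 2ē`, `[h̄,f̄] = −2f̄` and `[ē,f̄] = j(j−1728)h̄` hold on ℍ. -/
theorem barred_triple_relations (τ : ℂ) (hτ : 0 < τ.im) (hΔ : Δmod τ ≠ 0) :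
    hM τ * ((E4 τ * E6 τ / Δmod τ) • eM τ) - ((E4 τ * E6 τ / Δmod τ) • eM τ) * hM τ =
        (2 : ℂ) • ((E4 τ * E6 τ / Δmod τ) • eM τ) ∧
    hM τ * ((E4 τ ^ 2 * E6 τ / Δmod τ) • fM τ) - ((E4 τ ^ 2 * E6 τ / Δmod τ) • fM τ) * hM τ =
        (-2 : ℂ) • ((E4 τ ^ 2 * E6 τ / Δmod τ) • fM τ) ∧
    ((E4 τ * E6 τ / Δmod τ) • eM τ) * ((E4 τ ^ 2 * E6 τ / Δmod τ) • fM τ) -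
        ((E4 τ ^ 2 * E6 τ / Δmod τ) • fM τ) * ((E4 τ * E6 τ / Δmod τ) • eM τ) =
      (jmod τ * (jmod τ - 1728)) • hM τ := by
  refine ⟨?_, ?_, ?_⟩
  · rw [Matrix.mul_smul, Matrix.smul_mul, ← smul_sub, aux_he, smul_comm]
  · rw [Matrix.mul_smul, Matrix.smul_mul, ← smul_sub, aux_hf, smul_comm]
  · rw [aux_j τ hΔ, ← aux_ef]
    simp only [Matrix.mul_smul, Matrix.smul_mul, smul_smul, smul_sub]
    rw [mul_comm (E4 τ * E6 τ / Δmod τ)]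

end
end

section
/- In the Lie algebra of 2×2 matrices over ℂ[z,z⁻¹], define for k ∈ ℤ the matrices X_k = [[0, z^k],[z^{−k}, 0]] and G_m = (z^m − z^{−m})·[[1,0],[0,−1]] for m ∈ ℤ. Then for all integers k, ℓ, m, n the Onsager relations hold: [G_m, G_n] = 0, [G_m, X_k] = 2X_{k+m} − 2X_{k−m}, and [X_k, X_ℓ] = G_{k−ℓ}. -/
open LaurentPolynomial

noncomputable section

/-- The Laurent polynomial ring `ℂ[z,z⁻¹]`. -/
abbrev Lau := LaurentPolynomial ℂ

/-- `X_k = [[0, z^k],[z^{−k}, 0]]`. -/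
def X (k : ℤ) : Matrix (Fin 2) (Fin 2) Lau := !![0, T k; T (-k), 0]

/-- `G_m = (z^m − z^{−m})·[[1,0],[0,−1]]`. -/
def G (m : ℤ) : Matrix (Fin 2) (Fin 2) Lau := !![T m - T (-m), 0; 0, -(T m - T (-m))]

/-- the Onsager relations `[G_m,G_n] = 0`, `[G_m,X_k] = 2X_{k+m} − 2X_{k−m}`
and `[X_k,X_ℓ] = G_{k−ℓ}`. -/
theorem onsager_relations (k l m n : ℤ) :
    G m * G n - G n * G m = 0 ∧
    G m * X k - X k * G m = (2 : ℂ) • X (k + m) - (2 : ℂ) • X (k - m) ∧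
    X k * X l - X l * X k = G (k - l) := by
  have e : ∀ a b : ℤ, (T (a + b) : Lau) = T a * T b := fun a b => T_add a b
  have t : ∀ p : Lau, (2 : ℂ) • p = 2 * p := fun p => by
    rw [two_smul, two_mul]
  refine ⟨?_, ?_, ?_⟩
  · ext1 i j
    fin_cases i <;> fin_cases j <;> simp [G, Matrix.mul_apply, Fin.sum_univ_two] <;> ring
  · ext1 i j
    fin_cases i <;> fin_cases j <;>
      simp only [G, X, Matrix.sub_apply, Matrix.smul_apply, Matrix.mul_apply, Fin.sum_univ_two,
        t, sub_eq_add_neg k m, neg_add, neg_neg, e] <;>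
      generalize (T k : Lau) = a <;>
      generalize (T (-k) : Lau) = b <;>
      generalize (T m : Lau) = c <;>
      generalize (T (-m) : Lau) = d <;>
      simp <;> ring
  · ext1 i j
    fin_cases i <;> fin_cases j <;>
      simp only [G, X, Matrix.sub_apply, Matrix.mul_apply, Fin.sum_univ_two,
        sub_eq_add_neg k l, neg_add, neg_neg, e] <;>
      generalize (T k : Lau) = a <;>
      generalize (T (-k) : Lau) = b <;>
      generalize (T l : Lau) = c <;>
      generalize (T (-l) : Lau) = d <;>
      simp <;> ring

end
end

section
/- For every τ ∈ ℍ the fourth powers of the theta constants are the following linear combinations of F₂(τ) = 2E₂(2τ) − E₂(τ) and H₂(τ) = 2E₂(τ) − E₂(τ/2): θ₂(τ)⁴ = −(2/3)F₂(τ) + (2/3)H₂(τ), θ₃(τ)⁴ = (2/3)F₂(τ) + (1/3)H₂(τ), and θ₄(τ)⁴ = (4/3)F₂(τ) − (1/3)H₂(τ). -/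
open Matrix Complex

noncomputable section

/-- `F₂(τ) = 2E₂(2τ) − E₂(τ)`. -/
def F₂ (τ : ℂ) : ℂ := 2 * E2 (2 * τ) - E2 τ

/-- `H₂(τ) = 2E₂(τ) − E₂(τ/2)`. -/
def H₂ (τ : ℂ) : ℂ := 2 * E2 τ - E2 (τ / 2)

/-- The theta constant `θ₂(τ) = ∑_{n ∈ ℤ} e^{πiτ(n+1/2)²}`. -/
def θ₂ (τ : ℂ) : ℂ :=
  ∑' n : ℤ, Complex.exp ((Real.pi : ℂ) * Complex.I * τ * ((n : ℂ) + 1 / 2) ^ 2)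

/-- The theta constant `θ₃(τ) = ∑_{n ∈ ℤ} e^{πiτn²}`. -/
def θ₃ (τ : ℂ) : ℂ :=
  ∑' n : ℤ, Complex.exp ((Real.pi : ℂ) * Complex.I * τ * (n : ℂ) ^ 2)

/-- The theta constant `θ₄(τ) = ∑_{n ∈ ℤ} (−1)ⁿ e^{πiτn²}`. -/
def θ₄ (τ : ℂ) : ℂ :=
  ∑' n : ℤ, (-1 : ℂ) ^ n * Complex.exp ((Real.pi : ℂ) * Complex.I * τ * (n : ℂ) ^ 2)


open UpperHalfPlane Filter Topology MatrixGroups in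
lemma cusp_zero (k : ℕ) (hk : k < 12) (f : ℂ → ℂ)
    (hd : ∀ τ : ℂ, 0 < τ.im → DifferentiableAt ℂ f τ)
    (hT : ∀ τ : ℂ, 0 < τ.im → f (τ + 1) = f τ)
    (hS : ∀ τ : ℂ, 0 < τ.im → f (-1 / τ) = τ ^ k * f τ)
    (hl : Tendsto f (comap Complex.im atTop) (𝓝 0)) :
    ∀ τ : ℂ, 0 < τ.im → f τ = 0 := by
  let g : ℍ → ℂ := fun z => f z
  have h1 : SlashAction.map (k : ℤ) ModularGroup.S g = g := by
    ext z
    have hz : (z : ℂ) ≠ 0 := z.ne_zero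
    have := hS z z.2
    rw [SlashInvariantForm.slash_S_apply]
    have e : g (.mk _ z.im_inv_neg_coe_pos) = f (-1 / z) := by
      simp only [g]; congr 1
      simp [neg_div]
    rw [e, this]
    simp only [g, _root_.zpow_neg, zpow_natCast]
    field_simp
  have h2 : SlashAction.map (k : ℤ) ModularGroup.T g = g := by
    ext z
    rw [ModularForm.SL_slash_apply, UpperHalfPlane.modular_T_smul z]
    have := hT z z.2
    simp only [g]
    rw [← this]
    have hden : UpperHalfPlane.denom (ModularGroup.T : Matrix.SpecialLinearGroup (Fin 2) ℤ) (z : ℂ) = 1 := by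
      rw [ModularGroup.denom_apply]; simp [ModularGroup.coe_T]
    rw [hden]
    simp [add_comm]
  have h3 := SlashInvariantForm.slash_action_generators_SL2Z h1 h2
  have h4 : IsZeroAtImInfty g := by
    unfold IsZeroAtImInfty ZeroAtFilter
    refine hl.comp ?_
    rw [tendsto_comap_iff]
    exact tendsto_comap
  let F : CuspForm 𝒮ℒ (k : ℤ) := 
    { toFun := g
      slash_action_eq' := by
        rintro _ ⟨γ, rfl⟩
        exact h3 γ
      holo' := by
        rw [UpperHalfPlane.mdifferentiable_iff]
        intro z hz
        refine ((hd z hz).differentiableWithinAt).congr ?_ ?_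
        · intro y hy
          simp [g, ofComplex_apply_of_im_pos hy]
        · simp [g, ofComplex_apply_of_im_pos hz]
      zero_at_cusps' := by
        intro c hc
        rw [OnePoint.isZeroAt_iff_forall_SL2Z hc]
        intro γ _
        rw [h3 γ]
        exact h4 }
  have h5 : F = 0 := rank_zero_iff_forall_zero.mp
    (CuspForm.rank_eq_zero_of_weight_lt_twelve (k := (k : ℤ)) (by exact_mod_cast hk)) F
  intro τ hτ
  have : F ⟨τ, hτ⟩ = 0 := by rw [h5]; rfl
  exact this

lemma sigma1_eq (n : ℕ) : sigma1 n = ArithmeticFunction.sigma 1 n := by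
  simp [sigma1, ArithmeticFunction.sigma_one_apply]

lemma sigma1_two_mul_odd (m : ℕ) (h : Odd m) : sigma1 (2 * m) = 3 * sigma1 m := by
  rw [sigma1_eq, sigma1_eq, ArithmeticFunction.isMultiplicative_sigma.map_mul_of_coprime
    (by simpa using h)]
  rfl

lemma sigma1_four_mul (k : ℕ) : sigma1 (2 * (2 * k)) + 2 * sigma1 k = 3 * sigma1 (2 * k) := by
  rcases Nat.eq_zero_or_pos k with rfl | hk
  · simp [sigma1]
  obtain ⟨a, b, hb, rfl⟩ := Nat.exists_eq_two_pow_mul_odd hk.ne'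
  have key : ∀ c, sigma1 (2 ^ c * b) = (2 ^ (c + 1) - 1) * sigma1 b := by
    intro c
    rw [sigma1_eq, sigma1_eq, ArithmeticFunction.isMultiplicative_sigma.map_mul_of_coprime
      (Nat.Coprime.pow_left _ (by simpa using hb)),
      ArithmeticFunction.sigma_one_apply_prime_pow Nat.prime_two, Nat.geomSum_eq le_rfl]
    simp
  have e1 : 2 * (2 * (2 ^ a * b)) = 2 ^ (a + 2) * b := by ring
  have e2 : 2 * (2 ^ a * b) = 2 ^ (a + 1) * b := by ring
  rw [e1, e2, key, key, key]
  have h1 : 1 ≤ 2 ^ a := Nat.one_le_two_pow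
  zify [show 1 ≤ 2 ^ (a + 1) from Nat.one_le_two_pow, show 1 ≤ 2 ^ (a + 1 + 1) from Nat.one_le_two_pow, show 1 ≤ 2 ^ (a + 2 + 1) from Nat.one_le_two_pow]
  ring

lemma sigma1_le (n : ℕ) : sigma1 n ≤ n ^ 2 := by
  rw [sigma1_eq]
  simpa using ArithmeticFunction.sigma_le_pow_succ 1 n

/-- generating series over all naturals -/
def SS (τ : ℂ) : ℂ := ∑' n : ℕ, (sigma1 n : ℂ) * Complex.exp (2 * (Real.pi : ℂ) * Complex.I * (n : ℂ) * τ)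

lemma norm_term (n : ℕ) (τ : ℂ) : ‖Complex.exp (2 * (Real.pi : ℂ) * Complex.I * (n : ℂ) * τ)‖
    = (Real.exp (-(2 * Real.pi * τ.im))) ^ n := by
  rw [Complex.norm_exp, ← Real.exp_nat_mul]
  congr 1
  simp
  ring

lemma SS_summable {τ : ℂ} (hτ : 0 < τ.im) : Summable fun n : ℕ =>
    (sigma1 n : ℂ) * Complex.exp (2 * (Real.pi : ℂ) * Complex.I * (n : ℂ) * τ) := by
  have hr : ‖Real.exp (-(2 * Real.pi * τ.im))‖ < 1 := by
    rw [Real.norm_eq_abs, Real.abs_exp, Real.exp_lt_one_iff]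
    have := Real.pi_pos
    simp; positivity
  refine Summable.of_norm_bounded (summable_pow_mul_geometric_of_norm_lt_one 2 hr) ?_
  intro n
  rw [norm_mul, norm_term]
  gcongr
  simpa using (by exact_mod_cast sigma1_le n : (sigma1 n : ℝ) ≤ (n : ℝ) ^ 2)

lemma E2_eq {τ : ℂ} (hτ : 0 < τ.im) : E2 τ = 1 - 24 * SS τ := by
  rw [E2, SS, (SS_summable hτ).tsum_eq_zero_add]
  simp [sigma1]

lemma E2_eq_lib (z : UpperHalfPlane) : E2 z = EisensteinSeries.E2 z := by
  rw [EisensteinSeries.E2_eq_tsum_cexp, E2,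
    tsum_pnat_eq_tsum_succ (f := fun n ↦ (ArithmeticFunction.sigma 1 n : ℂ) * Complex.exp (2 * Real.pi * Complex.I * z) ^ n)]
  congr 2
  refine tsum_congr fun n => ?_
  rw [sigma1_eq, ← Complex.exp_nat_mul]
  congr 2
  push_cast; ring

lemma E2_T (τ : ℂ) : E2 (τ + 1) = E2 τ := by
  unfold E2
  congr 2
  refine tsum_congr fun n => ?_
  congr 1
  rw [Complex.exp_eq_exp_iff_exists_int]
  exact ⟨n + 1, by push_cast; ring⟩

lemma E2_S {τ : ℂ} (hτ : 0 < τ.im) : E2 (-1 / τ) = τ ^ 2 * E2 τ + 6 * τ / (Real.pi * Complex.I) := by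
  let z : UpperHalfPlane := ⟨τ, hτ⟩
  have hz : τ ≠ 0 := z.ne_zero
  have h := congrFun (EisensteinSeries.E2_slash_action ModularGroup.S) z
  rw [SlashInvariantForm.slash_S_apply] at h
  rw [← E2_eq_lib] at h
  simp only [Pi.sub_apply, Pi.smul_apply, EisensteinSeries.D2_S, ← E2_eq_lib, riemannZeta_two] at h
  have e : (-(z : ℂ))⁻¹ = -1 / τ := by
    simp [z, neg_div]
  rw [e] at h
  have e' : (z : ℂ) = τ := rfl
  rw [e'] at h
  have hpi : (Real.pi : ℂ) ≠ 0 := by exact_mod_cast Real.pi_ne_zero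
  have hI := Complex.I_sq
  field_simp at h
  field_simp
  simp only [smul_eq_mul] at h
  field_simp at h
  linear_combination Complex.I * h - 6 * hI * τ

lemma E2_diff {τ : ℂ} (hτ : 0 < τ.im) : DifferentiableAt ℂ E2 τ := by
  have h := UpperHalfPlane.mdifferentiable_iff.mp E2_mdifferentiable
  have h2 := (h τ hτ).differentiableAt (UpperHalfPlane.isOpen_upperHalfPlaneSet.mem_nhds hτ)
  refine h2.congr_of_eventuallyEq ?_
  filter_upwards [UpperHalfPlane.isOpen_upperHalfPlaneSet.mem_nhds hτ] with y hy
  simp only [Function.comp, UpperHalfPlane.ofComplex_apply_of_im_pos hy, ← E2_eq_lib]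

lemma exp_tendsto : Filter.Tendsto (fun τ : ℂ => Real.exp (-(2 * Real.pi * τ.im)))
    (Filter.comap Complex.im Filter.atTop) (nhds 0) := by
  have h : Filter.Tendsto (fun t : ℝ => Real.exp (-(2 * Real.pi * t))) Filter.atTop (nhds 0) := by
    refine Real.tendsto_exp_neg_atTop_nhds_zero.comp ?_
    exact Filter.tendsto_id.const_mul_atTop (by positivity)
  exact h.comp Filter.tendsto_comap

lemma E2_lim : Filter.Tendsto E2 (Filter.comap Complex.im Filter.atTop) (nhds 1) := by
  have hr : ‖Real.exp (-(2 * Real.pi))‖ < 1 := by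
    rw [Real.norm_eq_abs, Real.abs_exp, Real.exp_lt_one_iff]
    have := Real.pi_pos
    linarith
  have hS : Filter.Tendsto SS (Filter.comap Complex.im Filter.atTop) (nhds 0) := by
    have := tendsto_tsum_of_dominated_convergence (𝓕 := Filter.comap Complex.im Filter.atTop)
      (f := fun τ n => (sigma1 n : ℂ) * Complex.exp (2 * (Real.pi : ℂ) * Complex.I * (n : ℂ) * τ))
      (g := fun n => 0) (summable_pow_mul_geometric_of_norm_lt_one 2 hr) ?_ ?_
    · rw [tsum_zero] at this
      exact this
    · intro n
      rcases Nat.eq_zero_or_pos n with rfl | hn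
      · simpa [sigma1] using tendsto_const_nhds
      rw [tendsto_zero_iff_norm_tendsto_zero]
      simp only [norm_mul, norm_term]
      have := (exp_tendsto.pow n).const_mul ‖(sigma1 n : ℂ)‖
      simpa [hn.ne'] using this
    · filter_upwards [Filter.preimage_mem_comap (Filter.Ici_mem_atTop (1 : ℝ))] with τ hτ n
      have : 1 ≤ τ.im := hτ
      rw [norm_mul, norm_term]
      refine mul_le_mul ?_ (pow_le_pow_left₀ (Real.exp_pos _).le (Real.exp_le_exp.mpr ?_) n) (by positivity) (by positivity)
      · simpa using (by exact_mod_cast sigma1_le n : (sigma1 n : ℝ) ≤ (n : ℝ) ^ 2)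
      · have := Real.pi_pos
        nlinarith [mul_le_mul_of_nonneg_left hτ this.le]
  have h2 : Filter.Tendsto (fun τ => 1 - 24 * SS τ) (Filter.comap Complex.im Filter.atTop) (nhds 1) := by
    simpa using (hS.const_mul 24).const_sub 1
  refine h2.congr' ?_
  filter_upwards [Filter.preimage_mem_comap (Filter.Ioi_mem_atTop (0 : ℝ))] with τ hτ
  rw [E2_eq hτ]

lemma tsum_eo {u : ℕ → ℂ} (s : Summable u) : ∑' n, u n = ∑' n, u (2 * n) + ∑' n, u (2 * n + 1) := by
  have i1 : Function.Injective (fun n : ℕ => 2 * n) := fun a b h => by simpa using h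
  have i2 : Function.Injective (fun n : ℕ => 2 * n + 1) := fun a b h => by simpa using h
  exact (tsum_even_add_odd (s.comp_injective i1) (s.comp_injective i2)).symm

lemma SS_hecke {τ : ℂ} (hτ : 0 < τ.im) :
    SS (τ / 2) + SS ((τ + 1) / 2) = 6 * SS τ - 4 * SS (2 * τ) := by
  have i1 : 0 < (τ / 2).im := by simp; linarith
  have i2 : 0 < ((τ + 1) / 2).im := by simp; linarith
  have i3 : 0 < (2 * τ).im := by simp; linarith
  have s1 := SS_summable i1
  have s2 := SS_summable i2
  have s := s1.add s2
  have e1 : SS (τ / 2) + SS ((τ + 1) / 2) = ∑' n : ℕ, 2 * ((sigma1 (2 * n) : ℂ) * Complex.exp (2 * (Real.pi : ℂ) * Complex.I * (n : ℂ) * τ)) := by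
    rw [SS, SS, ← s1.tsum_add s2, tsum_eo s]
    rw [← add_zero (∑' n : ℕ, 2 * _)]
    congr 1
    · refine tsum_congr fun n => ?_
      have a1 : Complex.exp (2 * (Real.pi : ℂ) * Complex.I * ((2 * n : ℕ) : ℂ) * (τ / 2)) = Complex.exp (2 * (Real.pi : ℂ) * Complex.I * (n : ℂ) * τ) := by
        congr 1; push_cast; ring
      have a2 : Complex.exp (2 * (Real.pi : ℂ) * Complex.I * ((2 * n : ℕ) : ℂ) * ((τ + 1) / 2)) = Complex.exp (2 * (Real.pi : ℂ) * Complex.I * (n : ℂ) * τ) := by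
        rw [Complex.exp_eq_exp_iff_exists_int]
        exact ⟨n, by push_cast; ring⟩
      rw [a1, a2]; ring
    · refine (tsum_congr fun n => ?_).trans (tsum_zero (β := ℕ))
      have a2 : Complex.exp (2 * (Real.pi : ℂ) * Complex.I * ((2 * n + 1 : ℕ) : ℂ) * ((τ + 1) / 2)) = - Complex.exp (2 * (Real.pi : ℂ) * Complex.I * ((2 * n + 1 : ℕ) : ℂ) * (τ / 2)) := by
        rw [← Complex.exp_add_pi_mul_I, Complex.exp_eq_exp_iff_exists_int]
        exact ⟨n, by push_cast; ring⟩
      rw [a2]; ring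
  have s3 := SS_summable hτ
  have s4 := SS_summable i3
  let u : ℕ → ℂ := fun n => 2 * ((3 * (sigma1 n : ℂ) - (sigma1 (2 * n) : ℂ)) * Complex.exp (2 * (Real.pi : ℂ) * Complex.I * (n : ℂ) * τ))
  have s5 : Summable fun n : ℕ => 2 * ((sigma1 (2 * n) : ℂ) * Complex.exp (2 * (Real.pi : ℂ) * Complex.I * (n : ℂ) * τ)) := by
    have := ((SS_summable i1).comp_injective (mul_right_injective₀ (two_ne_zero (α := ℕ)))).mul_left 2
    refine this.congr fun n => ?_
    simp only [Function.comp]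
    congr 3; push_cast; ring
  have su : Summable u := by
    refine ((s3.mul_left 6).sub s5).congr fun n => ?_
    simp only [u]; ring
  have e2 : ∑' n, u n = 4 * SS (2 * τ) := by
    rw [tsum_eo su, SS, ← tsum_mul_left]
    rw [← add_zero (∑' n : ℕ, 4 * _)]
    congr 1
    · refine tsum_congr fun n => ?_
      have h : (sigma1 (2 * (2 * n)) : ℂ) + 2 * sigma1 n = 3 * sigma1 (2 * n) := by
        exact_mod_cast sigma1_four_mul n
      have a1 : Complex.exp (2 * (Real.pi : ℂ) * Complex.I * ((2 * n : ℕ) : ℂ) * τ) = Complex.exp (2 * (Real.pi : ℂ) * Complex.I * (n : ℂ) * (2 * τ)) := by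
        congr 1; push_cast; ring
      simp only [u]
      rw [a1, ← h]; ring
    · refine (tsum_congr fun n => ?_).trans (tsum_zero (β := ℕ))
      have h : (sigma1 (2 * (2 * n + 1)) : ℂ) = 3 * sigma1 (2 * n + 1) := by
        exact_mod_cast sigma1_two_mul_odd (2 * n + 1) ⟨n, rfl⟩
      simp only [u]
      rw [h]; ring
  rw [e1, ← e2, SS, ← tsum_mul_left, ← (s3.mul_left 6).tsum_sub su]
  refine tsum_congr fun n => ?_
  simp only [u]; ring

lemma E2_hecke {τ : ℂ} (hτ : 0 < τ.im) :
    E2 (τ / 2) + E2 ((τ + 1) / 2) = 6 * E2 τ - 4 * E2 (2 * τ) := by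
  have i1 : 0 < (τ / 2).im := by simp; linarith
  have i2 : 0 < ((τ + 1) / 2).im := by simp; linarith
  have i3 : 0 < (2 * τ).im := by simp; linarith
  rw [E2_eq i1, E2_eq i2, E2_eq i3, E2_eq hτ]
  linear_combination (-24) * SS_hecke hτ

lemma theta3_eq (τ : ℂ) : θ₃ τ = jacobiTheta τ := by
  unfold θ₃ jacobiTheta
  refine tsum_congr fun n => ?_
  congr 1; ring

lemma neg_one_zpow_exp (n : ℤ) : (-1 : ℂ) ^ n = Complex.exp (n * (Real.pi * Complex.I)) := by
  rw [Complex.exp_int_mul, Complex.exp_pi_mul_I]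

lemma theta4_eq (τ : ℂ) : θ₄ τ = jacobiTheta₂ (1 / 2) τ := by
  unfold θ₄ jacobiTheta₂ jacobiTheta₂_term
  refine tsum_congr fun n => ?_
  rw [neg_one_zpow_exp, ← Complex.exp_add]
  congr 1; ring

lemma theta4_eq' (τ : ℂ) : θ₄ τ = θ₃ (τ + 1) := by
  unfold θ₄ θ₃
  refine tsum_congr fun n => ?_
  rw [neg_one_zpow_exp, ← Complex.exp_add, Complex.exp_eq_exp_iff_exists_int]
  obtain ⟨k, hk⟩ := Int.even_mul_succ_self n
  have : (n : ℂ) * (n + 1) = k + k := by exact_mod_cast hk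
  refine ⟨n - k, ?_⟩
  push_cast
  linear_combination (-(Real.pi : ℂ) * Complex.I) * this

lemma theta2_eq (τ : ℂ) :
    θ₂ τ = Complex.exp (Real.pi * Complex.I * τ / 4) * jacobiTheta₂ (τ / 2) τ := by
  unfold θ₂ jacobiTheta₂ jacobiTheta₂_term
  rw [← tsum_mul_left]
  refine tsum_congr fun n => ?_
  rw [← Complex.exp_add]
  congr 1; ring

lemma theta2_eq' {τ : ℂ} (hτ : 0 < τ.im) : θ₂ τ = θ₃ (τ / 4) - θ₃ τ := by
  have i1 : 0 < (τ / 4).im := by simp; linarith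
  have s : Summable (fun n : ℤ => Complex.exp ((Real.pi : ℂ) * Complex.I * (τ / 4) * (n : ℂ) ^ 2)) := by
    refine ((summable_jacobiTheta₂_term_iff 0 (τ / 4)).mpr i1).congr fun n => ?_
    unfold jacobiTheta₂_term
    congr 1; ring
  have j1 : Function.Injective (fun n : ℤ => 2 * n) := fun a b h => by simpa using h
  have j2 : Function.Injective (fun n : ℤ => 2 * n + 1) := fun a b h => by simpa using h
  have h1 := (s.comp_injective j1).hasSum
  have h2 := (s.comp_injective j2).hasSum
  have h1 := j1.hasSum_range_iff.2 h1
  have h2 := j2.hasSum_range_iff.2 h2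
  have hc : IsCompl (Set.range fun n : ℤ => 2 * n) (Set.range fun n : ℤ => 2 * n + 1) := by
    have r1 : (Set.range fun n : ℤ => 2 * n) = {n | Even n} := by
      ext n
      simp only [Set.mem_range, Set.mem_setOf_eq, even_iff_exists_two_mul]
      constructor <;> rintro ⟨m, h⟩ <;> exact ⟨m, h.symm⟩
    have r2 : (Set.range fun n : ℤ => 2 * n + 1) = {n | Odd n} := by
      ext n
      simp only [Set.mem_range, Set.mem_setOf_eq, Odd]
      constructor <;> rintro ⟨m, h⟩ <;> exact ⟨m, h.symm⟩
    rw [r1, r2]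
    exact Int.isCompl_even_odd
  have h := (HasSum.add_isCompl (f := fun n : ℤ =>
    Complex.exp ((Real.pi : ℂ) * Complex.I * (τ / 4) * (n : ℂ) ^ 2)) hc h1 h2).tsum_eq
  have e : θ₃ (τ / 4) = θ₃ τ + θ₂ τ := by
    unfold θ₃ θ₂
    rw [h]
    congr 1
    · refine tsum_congr fun n => ?_
      simp only [Function.comp]
      congr 1; push_cast; ring
    · refine tsum_congr fun n => ?_
      simp only [Function.comp]
      congr 1; push_cast; ring
  rw [e]; ring

lemma theta3_T (τ : ℂ) : θ₃ (τ + 1) = θ₄ τ := (theta4_eq' τ).symm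

lemma theta4_T (τ : ℂ) : θ₄ (τ + 1) = θ₃ τ := by
  rw [theta4_eq', theta3_eq, theta3_eq, ← jacobiTheta_two_add τ]
  congr 1; ring

lemma theta2_T (τ : ℂ) : θ₂ (τ + 1) ^ 4 = - θ₂ τ ^ 4 := by
  have : θ₂ (τ + 1) = Complex.exp (Real.pi * Complex.I / 4) * θ₂ τ := by
    unfold θ₂
    rw [← tsum_mul_left]
    refine tsum_congr fun n => ?_
    rw [← Complex.exp_add, Complex.exp_eq_exp_iff_exists_int]
    obtain ⟨k, hk⟩ := Int.even_mul_succ_self n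
    have : (n : ℂ) * (n + 1) = k + k := by exact_mod_cast hk
    refine ⟨k, ?_⟩
    linear_combination ((Real.pi : ℂ) * Complex.I) * this
  rw [this, mul_pow, ← Complex.exp_nat_mul]
  have : ((4 : ℕ) : ℂ) * (Real.pi * Complex.I / 4) = Real.pi * Complex.I := by push_cast; ring
  rw [this, Complex.exp_pi_mul_I]; ring

lemma root_pow {τ : ℂ} : ((-Complex.I * τ) ^ (1 / 2 : ℂ)) ^ 4 = - τ ^ 2 := by
  rw [← Complex.cpow_nat_mul]
  norm_num
  rw [mul_pow, Complex.I_sq]; ring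

lemma theta3_S {τ : ℂ} (hτ : 0 < τ.im) : θ₃ (-1 / τ) ^ 4 = - τ ^ 2 * θ₃ τ ^ 4 := by
  have hz : τ ≠ 0 := by rintro rfl; simp at hτ
  have h := jacobiTheta₂_functional_equation 0 τ
  simp only [theta3_eq, jacobiTheta_eq_jacobiTheta₂]
  rw [h, mul_pow, mul_pow, div_pow, root_pow]
  simp
  field_simp

lemma theta4_S {τ : ℂ} (hτ : 0 < τ.im) : θ₄ (-1 / τ) ^ 4 = - τ ^ 2 * θ₂ τ ^ 4 := by
  have hz : τ ≠ 0 := by rintro rfl; simp at hτ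
  have h := jacobiTheta₂_functional_equation (τ / 2) τ
  rw [theta4_eq, theta2_eq, h, mul_pow, mul_pow, mul_pow, div_pow, root_pow]
  have e1 : τ / 2 / τ = 1 / 2 := by field_simp
  have e2 : -(Real.pi : ℂ) * Complex.I * (τ / 2) ^ 2 / τ = - (Real.pi * Complex.I * τ / 4) := by
    field_simp; ring
  rw [e1, e2, Complex.exp_neg]
  have := Complex.exp_ne_zero (Real.pi * Complex.I * τ / 4)
  field_simp

lemma im_S {τ : ℂ} (hτ : 0 < τ.im) : 0 < (-1 / τ).im := by
  have h := (UpperHalfPlane.mk τ hτ).im_inv_neg_coe_pos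
  have e : -1 / τ = (-τ)⁻¹ := by simp [neg_div]
  rw [e]; exact h

lemma theta2_S {τ : ℂ} (hτ : 0 < τ.im) : θ₂ (-1 / τ) ^ 4 = - τ ^ 2 * θ₄ τ ^ 4 := by
  have hz : τ ≠ 0 := by rintro rfl; simp at hτ
  have h := theta4_S (im_S hτ)
  have e : -1 / (-1 / τ) = τ := by field_simp
  rw [e] at h
  rw [h]; field_simp

lemma theta3_diff {τ : ℂ} (hτ : 0 < τ.im) : DifferentiableAt ℂ θ₃ τ := by
  rw [funext theta3_eq]
  exact differentiableAt_jacobiTheta hτ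

lemma theta4_diff {τ : ℂ} (hτ : 0 < τ.im) : DifferentiableAt ℂ θ₄ τ := by
  rw [funext theta4_eq']
  have : DifferentiableAt ℂ θ₃ (τ + 1) := theta3_diff (by simpa using hτ)
  exact this.comp (f := fun τ => τ + 1) τ (by fun_prop)

lemma theta2_diff {τ : ℂ} (hτ : 0 < τ.im) : DifferentiableAt ℂ θ₂ τ := by
  have h1 : DifferentiableAt ℂ θ₃ (τ / 4) := theta3_diff (by simp; linarith)
  have h2 : DifferentiableAt ℂ (fun τ => θ₃ (τ / 4) - θ₃ τ) τ :=
    (h1.comp (f := fun τ => τ / 4) τ (by fun_prop)).sub (theta3_diff hτ)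
  refine h2.congr_of_eventuallyEq ?_
  filter_upwards [UpperHalfPlane.isOpen_upperHalfPlaneSet.mem_nhds hτ] with y hy
  exact theta2_eq' hy

lemma theta3_lim : Filter.Tendsto θ₃ (Filter.comap Complex.im Filter.atTop) (nhds 1) := by
  rw [funext theta3_eq]
  have h := isBigO_at_im_infty_jacobiTheta_sub_one
  have h1 : Filter.Tendsto (fun τ : ℂ => Real.exp (-Real.pi * τ.im))
      (Filter.comap Complex.im Filter.atTop) (nhds 0) := by
    have h : Filter.Tendsto (fun t : ℝ => Real.exp (-Real.pi * t)) Filter.atTop (nhds 0) := by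
      have := Real.tendsto_exp_neg_atTop_nhds_zero.comp
        (Filter.tendsto_id.const_mul_atTop Real.pi_pos)
      refine this.congr fun t => ?_
      simp
    exact h.comp Filter.tendsto_comap
  have h2 := (h.trans_tendsto h1).add_const 1
  simpa using h2

lemma lim_add_one : Filter.Tendsto (fun τ : ℂ => τ + 1) (Filter.comap Complex.im Filter.atTop)
    (Filter.comap Complex.im Filter.atTop) := by
  rw [Filter.tendsto_comap_iff]
  refine Filter.tendsto_comap.congr fun τ => ?_
  simp

lemma lim_mul (c : ℝ) (hc : 0 < c) :
    Filter.Tendsto (fun τ : ℂ => (c : ℂ) * τ) (Filter.comap Complex.im Filter.atTop)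
    (Filter.comap Complex.im Filter.atTop) := by
  rw [Filter.tendsto_comap_iff]
  refine (Filter.tendsto_comap.const_mul_atTop hc).congr fun τ => ?_
  simp

lemma theta4_lim : Filter.Tendsto θ₄ (Filter.comap Complex.im Filter.atTop) (nhds 1) := by
  rw [funext theta4_eq']
  exact theta3_lim.comp lim_add_one

lemma theta2_lim : Filter.Tendsto θ₂ (Filter.comap Complex.im Filter.atTop) (nhds 0) := by
  have h := (theta3_lim.comp (lim_mul (1 / 4) (by norm_num))).sub theta3_lim
  rw [sub_self] at h
  refine h.congr' ?_
  filter_upwards [Filter.preimage_mem_comap (Filter.Ioi_mem_atTop (0 : ℝ))] with τ hτ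
  rw [theta2_eq' hτ]
  simp only [Function.comp]
  congr 2; push_cast; ring

lemma F2_lim : Filter.Tendsto F₂ (Filter.comap Complex.im Filter.atTop) (nhds 1) := by
  have h := ((E2_lim.comp (lim_mul 2 (by norm_num))).const_mul 2).sub E2_lim
  have e : (2 * 1 - 1 : ℂ) = 1 := by norm_num
  rw [e] at h
  refine h.congr fun τ => ?_
  simp [F₂]

lemma H2_lim : Filter.Tendsto H₂ (Filter.comap Complex.im Filter.atTop) (nhds 1) := by
  have h := (E2_lim.const_mul 2).sub (E2_lim.comp (lim_mul (1 / 2) (by norm_num)))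
  have e : (2 * 1 - 1 : ℂ) = 1 := by norm_num
  rw [e] at h
  refine h.congr fun τ => ?_
  simp only [H₂, Function.comp]
  congr 2; push_cast; ring

lemma F2_diff {τ : ℂ} (hτ : 0 < τ.im) : DifferentiableAt ℂ F₂ τ := by
  have h1 : DifferentiableAt ℂ E2 (2 * τ) := E2_diff (by simp; linarith)
  exact ((h1.comp (f := fun τ => 2 * τ) τ (by fun_prop)).const_mul 2).sub (E2_diff hτ)

lemma H2_diff {τ : ℂ} (hτ : 0 < τ.im) : DifferentiableAt ℂ H₂ τ := by
  have h1 : DifferentiableAt ℂ E2 (τ / 2) := E2_diff (by simp; linarith)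
  exact ((E2_diff hτ).const_mul 2).sub (h1.comp (f := fun τ => τ / 2) τ (by fun_prop))

lemma F2_T (τ : ℂ) : F₂ (τ + 1) = F₂ τ := by
  have e : 2 * (τ + 1) = 2 * τ + 1 + 1 := by ring
  rw [F₂, F₂, e, E2_T, E2_T, E2_T]

lemma H2_T {τ : ℂ} (hτ : 0 < τ.im) : H₂ (τ + 1) = 2 * F₂ τ - H₂ τ := by
  rw [F₂, H₂, H₂, E2_T]
  linear_combination - E2_hecke hτ

lemma F2_S {τ : ℂ} (hτ : 0 < τ.im) : F₂ (-1 / τ) = - τ ^ 2 / 2 * H₂ τ := by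
  have hz : τ ≠ 0 := by rintro rfl; simp at hτ
  have i1 : 0 < (τ / 2).im := by simp; linarith
  have e : 2 * (-1 / τ) = -1 / (τ / 2) := by field_simp
  rw [F₂, H₂, e, E2_S hτ, E2_S i1]
  ring

lemma H2_S {τ : ℂ} (hτ : 0 < τ.im) : H₂ (-1 / τ) = - 2 * τ ^ 2 * F₂ τ := by
  have hz : τ ≠ 0 := by rintro rfl; simp at hτ
  have i1 : 0 < (2 * τ).im := by simp; linarith
  have e : (-1 / τ) / 2 = -1 / (2 * τ) := by field_simp
  rw [F₂, H₂, e, E2_S hτ, E2_S i1]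
  ring

def fA (τ : ℂ) : ℂ := θ₂ τ ^ 4 - (-(2 / 3) * F₂ τ + 2 / 3 * H₂ τ)
def fB (τ : ℂ) : ℂ := θ₃ τ ^ 4 - (2 / 3 * F₂ τ + 1 / 3 * H₂ τ)
def fC (τ : ℂ) : ℂ := θ₄ τ ^ 4 - (4 / 3 * F₂ τ - 1 / 3 * H₂ τ)

lemma fA_T {τ : ℂ} (hτ : 0 < τ.im) : fA (τ + 1) = - fA τ := by
  unfold fA; rw [theta2_T, F2_T, H2_T hτ]; ring
lemma fB_T {τ : ℂ} (hτ : 0 < τ.im) : fB (τ + 1) = fC τ := by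
  unfold fB fC; rw [theta3_T, F2_T, H2_T hτ]; ring
lemma fC_T {τ : ℂ} (hτ : 0 < τ.im) : fC (τ + 1) = fB τ := by
  unfold fB fC; rw [theta4_T, F2_T, H2_T hτ]; ring
lemma fA_S {τ : ℂ} (hτ : 0 < τ.im) : fA (-1 / τ) = - τ ^ 2 * fC τ := by
  unfold fA fC; rw [theta2_S hτ, F2_S hτ, H2_S hτ]; ring
lemma fB_S {τ : ℂ} (hτ : 0 < τ.im) : fB (-1 / τ) = - τ ^ 2 * fB τ := by
  unfold fB; rw [theta3_S hτ, F2_S hτ, H2_S hτ]; ring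
lemma fC_S {τ : ℂ} (hτ : 0 < τ.im) : fC (-1 / τ) = - τ ^ 2 * fA τ := by
  unfold fA fC; rw [theta4_S hτ, F2_S hτ, H2_S hτ]; ring

lemma fA_diff {τ : ℂ} (hτ : 0 < τ.im) : DifferentiableAt ℂ fA τ :=
  ((theta2_diff hτ).pow 4).sub (((F2_diff hτ).const_mul _).add ((H2_diff hτ).const_mul _))
lemma fB_diff {τ : ℂ} (hτ : 0 < τ.im) : DifferentiableAt ℂ fB τ :=
  ((theta3_diff hτ).pow 4).sub (((F2_diff hτ).const_mul _).add ((H2_diff hτ).const_mul _))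
lemma fC_diff {τ : ℂ} (hτ : 0 < τ.im) : DifferentiableAt ℂ fC τ :=
  ((theta4_diff hτ).pow 4).sub (((F2_diff hτ).const_mul _).sub ((H2_diff hτ).const_mul _))

lemma fA_lim : Filter.Tendsto fA (Filter.comap Complex.im Filter.atTop) (nhds 0) := by
  have := (theta2_lim.pow 4).sub ((F2_lim.const_mul (-(2 / 3))).add (H2_lim.const_mul (2 / 3)))
  have e : (0 ^ 4 - (-(2 / 3) * 1 + 2 / 3 * 1) : ℂ) = 0 := by norm_num
  rw [e] at this
  exact this
lemma fB_lim : Filter.Tendsto fB (Filter.comap Complex.im Filter.atTop) (nhds 0) := by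
  have := (theta3_lim.pow 4).sub ((F2_lim.const_mul (2 / 3)).add (H2_lim.const_mul (1 / 3)))
  have e : (1 ^ 4 - (2 / 3 * 1 + 1 / 3 * 1) : ℂ) = 0 := by norm_num
  rw [e] at this
  exact this
lemma fC_lim : Filter.Tendsto fC (Filter.comap Complex.im Filter.atTop) (nhds 0) := by
  have := (theta4_lim.pow 4).sub ((F2_lim.const_mul (4 / 3)).sub (H2_lim.const_mul (1 / 3)))
  have e : (1 ^ 4 - (4 / 3 * 1 - 1 / 3 * 1) : ℂ) = 0 := by norm_num
  rw [e] at this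
  exact this

lemma rel1 {τ : ℂ} (hτ : 0 < τ.im) : (fB τ - fA τ - fC τ) ^ 2 = 0 := by
  refine cusp_zero 4 (by norm_num) (fun τ => (fB τ - fA τ - fC τ) ^ 2) ?_ ?_ ?_ ?_ τ hτ
  · intro τ hτ
    exact (((fB_diff hτ).sub (fA_diff hτ)).sub (fC_diff hτ)).pow 2
  · intro τ hτ
    simp only [fA_T hτ, fB_T hτ, fC_T hτ]; ring
  · intro τ hτ
    simp only [fA_S hτ, fB_S hτ, fC_S hτ]; ring
  · simpa using ((fB_lim.sub fA_lim).sub fC_lim).pow 2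

lemma rel2 {τ : ℂ} (hτ : 0 < τ.im) : fA τ ^ 2 + fB τ ^ 2 + fC τ ^ 2 = 0 := by
  refine cusp_zero 4 (by norm_num) (fun τ => fA τ ^ 2 + fB τ ^ 2 + fC τ ^ 2) ?_ ?_ ?_ ?_ τ hτ
  · intro τ hτ
    exact (((fA_diff hτ).pow 2).add ((fB_diff hτ).pow 2)).add ((fC_diff hτ).pow 2)
  · intro τ hτ
    simp only [fA_T hτ, fB_T hτ, fC_T hτ]; ring
  · intro τ hτ
    simp only [fA_S hτ, fB_S hτ, fC_S hτ]; ring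
  · simpa using ((fA_lim.pow 2).add (fB_lim.pow 2)).add (fC_lim.pow 2)

lemma rel3 {τ : ℂ} (hτ : 0 < τ.im) : (fA τ + fB τ) * (fB τ + fC τ) * (fC τ - fA τ) = 0 := by
  refine cusp_zero 6 (by norm_num) (fun τ => (fA τ + fB τ) * (fB τ + fC τ) * (fC τ - fA τ))
    ?_ ?_ ?_ ?_ τ hτ
  · intro τ hτ
    exact (((fA_diff hτ).add (fB_diff hτ)).mul ((fB_diff hτ).add (fC_diff hτ))).mul
      ((fC_diff hτ).sub (fA_diff hτ))
  · intro τ hτ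
    simp only [fA_T hτ, fB_T hτ, fC_T hτ]; ring
  · intro τ hτ
    simp only [fA_S hτ, fB_S hτ, fC_S hτ]; ring
  · simpa using ((fA_lim.add fB_lim).mul (fB_lim.add fC_lim)).mul (fC_lim.sub fA_lim)

lemma alg {a b c : ℂ} (h1 : (b - a - c) ^ 2 = 0) (h2 : a ^ 2 + b ^ 2 + c ^ 2 = 0)
    (h3 : (a + b) * (b + c) * (c - a) = 0) : a = 0 ∧ b = 0 ∧ c = 0 := by
  have hb : b = a + c := by
    have := pow_eq_zero_iff (two_ne_zero) |>.mp h1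
    linear_combination this
  subst hb
  have key : a = 0 ∧ c = 0 := by
    rcases mul_eq_zero.mp h3 with h | h
    · rcases mul_eq_zero.mp h with h | h
      · have hc : c = -2 * a := by linear_combination h
        subst hc
        have : a ^ 2 = 0 := by linear_combination h2 / 6
        have := pow_eq_zero_iff (two_ne_zero) |>.mp this
        simp [this]
      · have ha : a = -2 * c := by linear_combination h
        subst ha
        have : c ^ 2 = 0 := by linear_combination h2 / 6
        have := pow_eq_zero_iff (two_ne_zero) |>.mp this
        simp [this]
    · have hc : c = a := by linear_combination h
      subst hc
      have : c ^ 2 = 0 := by linear_combination h2 / 6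
      have := pow_eq_zero_iff (two_ne_zero) |>.mp this
      simp [this]
  simp [key.1, key.2]

/-- STATEMENT 16: the fourth powers of the theta constants expressed in terms of
`F₂` and `H₂`. -/
theorem theta_fourth_powers_from_F2_H2 (τ : ℂ) (hτ : 0 < τ.im) :
    θ₂ τ ^ 4 = -(2 / 3) * F₂ τ + 2 / 3 * H₂ τ ∧
    θ₃ τ ^ 4 = 2 / 3 * F₂ τ + 1 / 3 * H₂ τ ∧
    θ₄ τ ^ 4 = 4 / 3 * F₂ τ - 1 / 3 * H₂ τ := by
  obtain ⟨ha, hb, hc⟩ := alg (rel1 hτ) (rel2 hτ) (rel3 hτ)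
  exact ⟨sub_eq_zero.mp ha, sub_eq_zero.mp hb, sub_eq_zero.mp hc⟩

end
end

section
/- For every τ ∈ ℍ with Δ(τ) ≠ 0 the derivation δ = (1/(2πi))·(E₄E₆/Δ)·d/dτ acts on Klein's absolute invariant by δ(j) = −j(j − 1728); that is, (1/(2πi))·(E₄(τ)E₆(τ)/Δ(τ))·j′(τ) = −j(τ)(j(τ) − 1728), where j′ denotes the complex derivative of j. -/
open Complex

noncomputable section

namespace DeltaJ

open UpperHalfPlane hiding I
open ModularForm EisensteinSeries ModularFormClass SlashInvariantFormClass Filter Topology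
open Derivative
open scoped Manifold MatrixGroups

lemma E4_eq (z : ℍ) : E4 z = E₄ z := by
  rw [show (E₄ z : ℂ) = _ from q_expansion_bernoulli (k := 4) (by norm_num) ⟨2, rfl⟩ z]
  have hb : bernoulli 4 = -1 / 30 := by decide +kernel
  rw [hb, tsum_pnat_eq_tsum_succ (f := fun n : ℕ => (ArithmeticFunction.sigma (4 - 1) n : ℂ) *
    cexp (2 * Real.pi * I * z) ^ (n : ℤ))]
  norm_num [E4]
  refine tsum_congr fun n => ?_
  rw [show ((n : ℤ) + 1) = ((n + 1 : ℕ) : ℤ) by push_cast; rfl, zpow_natCast,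
    ← Complex.exp_nat_mul]
  simp only [sigmaN, ArithmeticFunction.sigma_apply]
  congr 2
  push_cast
  ring

lemma E6_eq (z : ℍ) : E6 z = E₆ z := by
  rw [show (E₆ z : ℂ) = _ from q_expansion_bernoulli (k := 6) (by norm_num) ⟨3, rfl⟩ z]
  have hb : bernoulli 6 = 1 / 42 := by decide +kernel
  rw [hb, tsum_pnat_eq_tsum_succ (f := fun n : ℕ => (ArithmeticFunction.sigma (6 - 1) n : ℂ) *
    cexp (2 * Real.pi * I * z) ^ (n : ℤ))]
  norm_num [E6]
  refine tsum_congr fun n => ?_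
  rw [show ((n : ℤ) + 1) = ((n + 1 : ℕ) : ℤ) by push_cast; rfl, zpow_natCast,
    ← Complex.exp_nat_mul]
  simp only [sigmaN, ArithmeticFunction.sigma_apply]
  congr 2
  push_cast
  ring

lemma D_eq {k : ℤ} (f : ModularForm 𝒮ℒ k) (z : ℍ) :
    D f z = Function.Periodic.qParam 1 z *
      deriv (cuspFunction 1 f) (Function.Periodic.qParam 1 z) := by
  have hq : HasDerivAt (Function.Periodic.qParam 1)
      (Function.Periodic.qParam 1 z * (2 * Real.pi * I)) (z : ℂ) := by
    have h1 : HasDerivAt (fun w : ℂ => 2 * Real.pi * I * w / ((1 : ℝ) : ℂ))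
        (2 * Real.pi * I) (z : ℂ) := by
      simpa using (hasDerivAt_id (z : ℂ)).const_mul (2 * Real.pi * I)
    exact h1.cexp
  have hc : DifferentiableAt ℂ (cuspFunction 1 f) (Function.Periodic.qParam 1 z) :=
    ModularFormClass.differentiableAt_cuspFunction f one_pos one_mem_strictPeriods_SL
      (Function.Periodic.norm_qParam_lt_one one_pos z.im_pos)
  have hev : (f ∘ ofComplex) =ᶠ[𝓝 (z : ℂ)]
      (cuspFunction 1 f) ∘ (Function.Periodic.qParam 1) := by
    filter_upwards [isOpen_upperHalfPlaneSet.mem_nhds z.im_pos] with w hw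
    have := SlashInvariantFormClass.eq_cuspFunction f (⟨w, hw⟩ : ℍ)
      one_mem_strictPeriods_SL one_ne_zero
    simp only [Function.comp_apply, ofComplex_apply_of_im_pos hw]
    exact this.symm
  rw [normalizedDerivOfComplex, hev.deriv_eq, (hc.hasDerivAt.comp (z : ℂ) hq).deriv]
  field_simp [Complex.two_pi_I_ne_zero]

/-- The function `2 E₄ D E₆ - 3 E₆ D E₄`. -/
def F (z : ℍ) : ℂ := 2 * E₄ z * D E₆ z - 3 * E₆ z * D E₄ z

lemma F_eq : F = (2 : ℂ) • ((E₄ : ℍ → ℂ) * serreDerivative (6 : ℤ) E₆)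
    - (3 : ℂ) • ((E₆ : ℍ → ℂ) * serreDerivative (4 : ℤ) E₄) := by
  ext z
  simp [F]
  ring

lemma slash_E (k : ℤ) (f : ModularForm 𝒮ℒ k) (γ : SL(2, ℤ)) : (f : ℍ → ℂ) ∣[k] γ = f :=
  f.slash_action_eq' _ ⟨γ, rfl⟩

lemma F_slash (γ : SL(2, ℤ)) : F ∣[(12 : ℤ)] γ = F := by
  have h1 := ModularForm.mul_slash_SL2 4 (6 + 2) γ (E₄ : ℍ → ℂ) (serreDerivative (6 : ℤ) E₆)
  rw [slash_E, serreDerivative_slash_invariant (ModularFormClass.holo E₆) (slash_E 6 E₆ γ)] at h1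
  have h2 := ModularForm.mul_slash_SL2 6 (4 + 2) γ (E₆ : ℍ → ℂ) (serreDerivative (4 : ℤ) E₄)
  rw [slash_E, serreDerivative_slash_invariant (ModularFormClass.holo E₄) (slash_E 4 E₄ γ)] at h2
  rw [show (4 + (6 + 2) : ℤ) = 12 by norm_num] at h1
  rw [show (6 + (4 + 2) : ℤ) = 12 by norm_num] at h2
  rw [F_eq, sub_eq_add_neg, SlashAction.add_slash, SlashAction.neg_slash,
    ModularForm.SL_smul_slash, ModularForm.SL_smul_slash]
  rw [h1, h2]

lemma F_holo : MDiff F := by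
  rw [F_eq]
  exact (((ModularFormClass.holo E₄).mul
    (serreDerivative_mdifferentiable _ (ModularFormClass.holo E₆))).const_smul 2).sub
    (((ModularFormClass.holo E₆).mul
    (serreDerivative_mdifferentiable _ (ModularFormClass.holo E₄))).const_smul 3)

lemma tendsto_E {k : ℤ} (f : ModularForm 𝒮ℒ k) :
    Tendsto f atImInfty (𝓝 ((qExpansion 1 f).coeff 0)) := by
  have ha := ModularFormClass.analyticAt_cuspFunction_zero f one_pos one_mem_strictPeriods_SL
  have h := ha.continuousAt.tendsto.comp (qParam_tendsto_atImInfty one_pos)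
  simp only [qExpansion_coeff, Nat.factorial_zero, Nat.cast_one, inv_one, one_mul,
    iteratedDeriv_zero]
  exact h.congr fun τ =>
    SlashInvariantFormClass.eq_cuspFunction f τ one_mem_strictPeriods_SL one_ne_zero

lemma tendsto_D {k : ℤ} (f : ModularForm 𝒮ℒ k) :
    Tendsto (fun z : ℍ => D f z / Function.Periodic.qParam 1 z) atImInfty
      (𝓝 ((qExpansion 1 f).coeff 1)) := by
  have ha := ModularFormClass.analyticAt_cuspFunction_zero f one_pos one_mem_strictPeriods_SL
  have h := ha.deriv.continuousAt.tendsto.comp (qParam_tendsto_atImInfty one_pos)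
  simp only [qExpansion_coeff, Nat.factorial_one, Nat.cast_one, inv_one, one_mul,
    iteratedDeriv_one]
  refine h.congr fun τ => ?_
  rw [D_eq, mul_div_cancel_left₀ _ (Function.Periodic.qParam_ne_zero _)]
  rfl

lemma tendsto_F : Tendsto (fun z : ℍ => F z / Function.Periodic.qParam 1 z) atImInfty
    (𝓝 (-1728)) := by
  have h4 := tendsto_E E₄
  have h6 := tendsto_E E₆
  have d4 := tendsto_D E₄
  have d6 := tendsto_D E₆
  rw [E₄_qExpansion_coeff_one] at d4
  rw [E₆_qExpansion_coeff_one] at d6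
  rw [show (qExpansion 1 E₄).coeff 0 = 1 from E_qExpansion_coeff_zero _ ⟨2, rfl⟩] at h4
  rw [show (qExpansion 1 E₆).coeff 0 = 1 from E_qExpansion_coeff_zero _ ⟨3, rfl⟩] at h6
  have := ((h4.mul d6).const_mul 2).sub ((h6.mul d4).const_mul 3)
  norm_num at this
  refine this.congr fun z => ?_
  simp only [F]
  ring

lemma F_zero : IsZeroAtImInfty F := by
  have h := tendsto_F.mul (qParam_tendsto_atImInfty one_pos)
  rw [mul_zero] at h
  refine h.congr fun z => ?_
  rw [div_mul_cancel₀ _ (Function.Periodic.qParam_ne_zero _)]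

/-- `F` as a cusp form. -/
def Fcusp : CuspForm 𝒮ℒ 12 where
  toFun := F
  slash_action_eq' A hA := by
    obtain ⟨A, rfl⟩ := hA
    exact F_slash A
  holo' := F_holo
  zero_at_cusps' hc := by
    rw [Subgroup.IsArithmetic.isCusp_iff_isCusp_SL2Z] at hc
    rw [OnePoint.isZeroAt_iff_forall_SL2Z hc]
    intro γ _
    rw [F_slash]
    exact F_zero

lemma F_eq_discriminant (z : ℍ) : F z = -1728 * discriminant z := by
  obtain ⟨c, hc⟩ := CuspForm.exists_smul_discriminant_of_weight_eq_twelve Fcusp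
  have hF : ∀ z, F z = c * discriminant z := fun z => (DFunLike.congr_fun hc z).symm
  have h1 : Tendsto (fun z : ℍ => F z / Function.Periodic.qParam 1 z) atImInfty (𝓝 (c * 1)) := by
    refine (tendsto_atImInfty_tprod_one_sub_eta_q_pow.const_mul c).congr fun z => ?_
    rw [hF, discriminant_eq_q_prod]
    field_simp [Function.Periodic.qParam_ne_zero]
  have := tendsto_nhds_unique h1 tendsto_F
  rw [mul_one] at this
  rw [hF, this]

end DeltaJ

/-- STATEMENT 18: the derivation `δ = (1/2πi)(E₄E₆/Δ)d/dτ` acts on the `j`-invariant by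
`δ(j) = −j(j−1728)`. -/
theorem delta_derivation_on_j (τ : ℂ) (hτ : 0 < τ.im) (hΔ : Δmod τ ≠ 0) :
    1 / (2 * (Real.pi : ℂ) * Complex.I) * (E4 τ * E6 τ / Δmod τ) * deriv jmod τ =
      -(jmod τ * (jmod τ - 1728)) := by
  have hpi : (2 * (Real.pi : ℂ) * Complex.I) ≠ 0 := Complex.two_pi_I_ne_zero
  let z : UpperHalfPlane := ⟨τ, hτ⟩
  have hev4 : E4 =ᶠ[nhds τ] (ModularForm.E₄ : UpperHalfPlane → ℂ) ∘ UpperHalfPlane.ofComplex := by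
    filter_upwards [UpperHalfPlane.isOpen_upperHalfPlaneSet.mem_nhds hτ] with w hw
    simp only [Function.comp_apply, UpperHalfPlane.ofComplex_apply_of_im_pos hw]
    exact DeltaJ.E4_eq ⟨w, hw⟩
  have hev6 : E6 =ᶠ[nhds τ] (ModularForm.E₆ : UpperHalfPlane → ℂ) ∘ UpperHalfPlane.ofComplex := by
    filter_upwards [UpperHalfPlane.isOpen_upperHalfPlaneSet.mem_nhds hτ] with w hw
    simp only [Function.comp_apply, UpperHalfPlane.ofComplex_apply_of_im_pos hw]
    exact DeltaJ.E6_eq ⟨w, hw⟩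
  have d4 : HasDerivAt E4 (deriv E4 τ) τ :=
    ((UpperHalfPlane.mdifferentiableAt_iff.mp
      (ModularFormClass.holo ModularForm.E₄ z)).congr_of_eventuallyEq hev4).hasDerivAt
  have d6 : HasDerivAt E6 (deriv E6 τ) τ :=
    ((UpperHalfPlane.mdifferentiableAt_iff.mp
      (ModularFormClass.holo ModularForm.E₆ z)).congr_of_eventuallyEq hev6).hasDerivAt
  have hW : 2 * E4 τ * deriv E6 τ - 3 * E6 τ * deriv E4 τ =
      -(E4 τ ^ 3 - E6 τ ^ 2) * (2 * (Real.pi : ℂ) * Complex.I) := by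
    have h := DeltaJ.F_eq_discriminant z
    rw [ModularForm.discriminant_eq_E₄_cube_sub_E₆_sq, DeltaJ.F,
      Derivative.normalizedDerivOfComplex, Derivative.normalizedDerivOfComplex,
      ← DeltaJ.E4_eq, ← DeltaJ.E6_eq] at h
    change 2 * E4 τ * ((2 * (Real.pi : ℂ) * Complex.I)⁻¹ * deriv _ τ) -
      3 * E6 τ * ((2 * (Real.pi : ℂ) * Complex.I)⁻¹ * deriv _ τ) =
      -1728 * ((E4 τ ^ 3 - E6 τ ^ 2) / 1728) at h
    rw [← hev4.deriv_eq, ← hev6.deriv_eq] at h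
    have h' := congrArg (· * (2 * (Real.pi : ℂ) * Complex.I)) h
    field_simp at h'
    linear_combination h'
  have dΔ : HasDerivAt Δmod ((3 * E4 τ ^ 2 * deriv E4 τ - 2 * E6 τ * deriv E6 τ) / 1728) τ := by
    have := ((d4.pow 3).sub (d6.pow 2)).div_const 1728
    norm_num at this
    exact this
  have dj : HasDerivAt jmod _ τ := (d4.pow 3).div dΔ hΔ
  rw [dj.deriv]
  have hE : E4 τ ^ 3 - E6 τ ^ 2 = 1728 * Δmod τ := by rw [Δmod]; ring
  have key : 3 * E4 τ ^ 2 * deriv E4 τ * Δmod τ -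
      E4 τ ^ 3 * ((3 * E4 τ ^ 2 * deriv E4 τ - 2 * E6 τ * deriv E6 τ) / 1728) =
      -(E4 τ ^ 2 * E6 τ * Δmod τ * (2 * (Real.pi : ℂ) * Complex.I)) := by
    rw [hE] at hW
    linear_combination E4 τ ^ 2 * E6 τ / 1728 * hW - 3 * E4 τ ^ 2 * deriv E4 τ / 1728 * hE
  generalize 2 * (Real.pi : ℂ) * Complex.I = c at key hpi ⊢
  simp only [jmod, Pi.pow_apply]
  norm_num
  rw [key]
  field_simp
  linear_combination (E4 τ ^ 3) * hE
end
end
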